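/- Let w be in B_n, a := w(1), 1 ≤ p ≤ n, p < q ≤ n, c := w(q), b := -c, and suppose a ≺ b. Let Delta(q) denote the suffix of Delta beginning with (1,q). Then, in Z[t], the sum over all increasing-admissible subsequences T of Delta(q) with (wT)(1) = b of t^{(l(wT) - l(w) - |T|)/2} (1-t)^{|T|} equals t^{N_{ab}(w[2,q-1])} (1-t). -/

import Mathlib

/-!
All reflections in `Δ_q` involve position `1`, so a subsequence `T` acts by replacing the first
letter of the window step by step. Comparing inversions letter by letter (`len_swap`,
`len_neg_swap`, `len_neg_head`) shows that a step increases the length iff it increases the first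
letter for `≺`, and that a step from first letter `a` to `d` adds `2 N + 1` to the length, where `N`
is an explicit count of letters between `a` and `d`. Hence the exponent of `t` is additive along
`T`, and the sum is computed by the recursion `chainSum`, which decides for one reflection after
the other whether it is used (`finsum_eq_chainSum`). A first letter beyond `b` never comes
back (`chainSum_of_gt`), and one equal to `b` is never moved again (`chainSum_self`).

The evaluation proceeds from the end of `Δ`, with `b = -c`. For the suffix beginning with `(1,-s)`,
where `c` stands at position `q ≤ s`, the result (`neg_sum`) is `t ^ E (1 - t)`, where `E` is the
exponent of the single step `(1,-q)` corrected so that the letters at positions `q + 1, …, s` are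
counted with one sign only. For the suffix beginning with `(1,r)`, where `c` stands at position
`1` or at a position `q` with `p < q < r`, it is `t ^ (N_{ab}(w[2,r-1])) (1 - t)` (`pos_sum`).
Both are proved by peeling off the first reflection. If it leads to a first letter `d` with
`a ≺ d ≺ b`, the counts satisfy `N_{ad} + N_{db} = N_{ab}` (`Nab_split`), and the two terms combine
through `t ^ (E + 1) (1 - t) + t ^ E (1 - t) ^ 2 = t ^ E (1 - t)`. In all other cases the term using
that reflection vanishes, except for `(1,-q)` in `neg_sum` and `(1,-1)` with `w(1) = c` in
`pos_sum`, where it is the only one that survives. One more step of the same kind, for the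
reflection `(1,q)` itself, gives the theorem (`chainSum_deltaSuffixPos`).
-/

open scoped BigOperators

namespace HL

/-! ### The order `≺` on nonzero integers in `[-n,n]`:
`1 ≺ 2 ≺ ... ≺ n ≺ -n ≺ -(n-1) ≺ ... ≺ -1`. -/

def slt (a b : ℤ) : Prop :=
  (0 < a ∧ b < 0) ∨ (0 < a ∧ 0 < b ∧ a < b) ∨ (a < 0 ∧ b < 0 ∧ a < b)

instance slt.dec (a b : ℤ) : Decidable (slt a b) := by unfold slt; infer_instance

def sle (a b : ℤ) : Prop := slt a b ∨ a = b

instance sle.dec (a b : ℤ) : Decidable (sle a b) := by unfold sle; infer_instance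

/-! ### Signed permutations (windows), reflections acting on the right -/

/-- The right action of a reflection on a window (or column), with 1-based
positions.  The reflection `(i, j)` with `j > 0` transposes positions `i` and
`j`; the reflection `(i, -j)` (i.e. `(i,\bar\jmath)`) with `i ≠ j` transposes
positions `i, j` and negates both entries; `(i, -i)` negates position `i`. -/
def applyRefl (l : List ℤ) (t : ℕ × ℤ) : List ℤ :=
  if 0 < t.2 then
    (l.set (t.1 - 1) (l.getD (t.2.toNat - 1) 0)).set (t.2.toNat - 1) (l.getD (t.1 - 1) 0)
  else
    if t.1 = (-t.2).toNat then l.set (t.1 - 1) (-(l.getD (t.1 - 1) 0))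
    else (l.set (t.1 - 1) (-(l.getD ((-t.2).toNat - 1) 0))).set ((-t.2).toNat - 1)
          (-(l.getD (t.1 - 1) 0))

def applyAll (w : List ℤ) (T : List (ℕ × ℤ)) : List ℤ := T.foldl applyRefl w

/-- The word `w[i,j] = w(i) w(i+1) ... w(j)`, 1-based and inclusive. -/
def word (l : List ℤ) (i j : ℕ) : List ℤ := (l.drop (i - 1)).take (j + 1 - i)

/-- `N_{ab}(u)` = number of letters `c` of the word `u` with `a ≺ c ≺ b`. -/
def Nab (a b : ℤ) (u : List ℤ) : ℕ :=
  (u.filter (fun c => decide (slt a c ∧ slt c b))).length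

/-- `ℓ₊(w) = #{(k,l) : k < l, w(k) ≻ w(l)}`. -/
def lplus (l : List ℤ) : ℕ :=
  (((Finset.range l.length) ×ˢ (Finset.range l.length)).filter
    (fun p => p.1 < p.2 ∧ slt (l.getD p.2 0) (l.getD p.1 0))).card

/-- `ℓ₋(w) = #{(k,l) : k ≤ l, w(k) ≻ -w(l)}`. -/
def lminus (l : List ℤ) : ℕ :=
  (((Finset.range l.length) ×ˢ (Finset.range l.length)).filter
    (fun p => p.1 ≤ p.2 ∧ slt (-(l.getD p.2 0)) (l.getD p.1 0))).card

/-- The Coxeter length of a signed permutation given by its window. -/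
def len (l : List ℤ) : ℕ := lplus l + lminus l

/-- The (finite) set of windows of all signed permutations in `B_n`. -/
def allWindows (n : ℕ) : Finset (List ℤ) :=
  Finset.image (fun w : Equiv.Perm (Fin n) × (Fin n → Bool) =>
    (List.finRange n).map (fun i =>
      if w.2 i then -(((w.1 i : ℕ) : ℤ) + 1) else ((w.1 i : ℕ) : ℤ) + 1)) Finset.univ

/-- `w`-admissibility of a sequence of reflections: a strictly decreasing
chain in Bruhat order (recorded via the length function). -/
def decChain : List ℤ → List (ℕ × ℤ) → Bool
  | _, [] => true
  | w, t :: ts => (decide (len (applyRefl w t) < len w)) && decChain (applyRefl w t) ts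

/-- Increasing-admissibility: a strictly increasing chain. -/
def incChain : List ℤ → List (ℕ × ℤ) → Bool
  | _, [] => true
  | w, t :: ts => (decide (len w < len (applyRefl w t))) && incChain (applyRefl w t) ts

/-- The subsequence of a chain `Γ` selected by a set `J` of (0-based) positions. -/
def selChain (Γ : List (ℕ × ℤ)) (J : Finset ℕ) : List (ℕ × ℤ) :=
  (J.sort (· ≤ ·)).map (fun j => Γ.getD j (0, 0))

/-! ### The `λ`-chain of type `C_n` -/

/-- `Γ'_j = ((1,-j),(2,-j),...,(j-1,-j))`. -/
def gammaPrime (j : ℕ) : List (ℕ × ℤ) := (List.range (j - 1)).map (fun r => (r + 1, -(j : ℤ)))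

/-- `Γ_j(k) = ((1,-j),...,(j-1,-j),(j,-(k+1)),...,(j,-n),(j,-j),(j,n),...,(j,k+1))`. -/
def gammaJK (n j k : ℕ) : List (ℕ × ℤ) :=
  gammaPrime j
    ++ (List.range (n - k)).map (fun r => (j, -((k + 1 + r : ℕ) : ℤ)))
    ++ [(j, -(j : ℤ))]
    ++ (List.range (n - k)).map (fun r => (j, ((n - r : ℕ) : ℤ)))

/-- `Γ(k) = Γ'_2 ⋯ Γ'_k Γ_1(k) ⋯ Γ_k(k)` (type `C_n`). -/
def gammaChain (n k : ℕ) : List (ℕ × ℤ) :=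
  ((List.range (k - 1)).map (fun r => gammaPrime (r + 2))).flatten
    ++ ((List.range k).map (fun r => gammaJK n (r + 1) k)).flatten

/-- `λ'_i = #{j : λ_j ≥ i}`, the conjugate partition. -/
def conj (n : ℕ) (lam : Fin n → ℕ) (i : ℕ) : ℕ :=
  (Finset.univ.filter (fun j : Fin n => i ≤ lam j)).card

/-- `λ_1`, the largest part. -/
def lamOne (n : ℕ) (lam : Fin n → ℕ) : ℕ := Finset.univ.sup lam

/-- The fixed `λ`-chain `Γ = Γ^{λ_1} Γ^{λ_1-1} ⋯ Γ^1` with `Γ^i = Γ(λ'_i)`. -/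
def lambdaChain (n : ℕ) (lam : Fin n → ℕ) : List (ℕ × ℤ) :=
  ((List.range (lamOne n lam)).map
    (fun r => gammaChain n (conj n lam (lamOne n lam - r)))).flatten

/-- The set `A(λ)` of admissible pairs `(w, J)`. -/
def ASet (n : ℕ) (lam : Fin n → ℕ) : Set (List ℤ × Finset ℕ) :=
  {p | p.1 ∈ allWindows n ∧ p.2 ⊆ Finset.range (lambdaChain n lam).length ∧
    decChain p.1 (selChain (lambdaChain n lam) p.2) = true}

/-! ### Roots, coroots, affine reflections, and the weight `μ(T)` -/

/-- The root of type `C_n` corresponding to a symbol: `(i,j) ↦ ε_i - ε_j`,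
`(i,-j) ↦ ε_i + ε_j` for `i < j`, and `(i,-i) ↦ 2ε_i`. -/
def rootVec (n : ℕ) (β : ℕ × ℤ) : Fin n → ℤ := fun r =>
  (if ((r : ℕ) + 1 : ℤ) = (β.1 : ℤ) then 1 else 0) +
  (if 0 < β.2 then (if ((r : ℕ) + 1 : ℤ) = β.2 then -1 else 0)
   else (if ((r : ℕ) + 1 : ℤ) = -β.2 then 1 else 0))

/-- The coroot (type `C_n`): `(2ε_i)^∨ = ε_i`, the long rootss are unchanged. -/
def corootVec (n : ℕ) (β : ℕ × ℤ) : Fin n → ℤ :=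
  if β.2 = -(β.1 : ℤ) then (fun r => if ((r : ℕ) + 1 : ℤ) = (β.1 : ℤ) then 1 else 0)
  else rootVec n β

/-- Standard inner product on `ℤ^n`. -/
def ip (n : ℕ) (u v : Fin n → ℤ) : ℤ := ∑ r, u r * v r

/-- The affine reflection in the hyperplane `{v : ⟨v, β^∨⟩ = c}`. -/
def affRefl (n : ℕ) (β : ℕ × ℤ) (c : ℤ) (v : Fin n → ℤ) : Fin n → ℤ :=
  fun r => v r - (ip n v (corootVec n β) - c) * rootVec n β r

/-- `l_k = #{j ≤ k : β_j = β_k}` (here `k` is 0-based). -/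
def lCount (Γ : List (ℕ × ℤ)) (k : ℕ) : ℕ := (Γ.take (k + 1)).count (Γ.getD k (0, 0))

/-- `μ(J) = \hat r_{j_1} ⋯ \hat r_{j_s}(λ)` for `J = {j_1 < ... < j_s}`. -/
def muJ (n : ℕ) (Γ : List (ℕ × ℤ)) (lamVec : Fin n → ℤ) (J : Finset ℕ) : Fin n → ℤ :=
  (J.sort (· ≤ ·)).foldr (fun j v => affRefl n (Γ.getD j (0, 0)) ((lCount Γ j : ℕ) : ℤ) v) lamVec

/-- The linear action of a signed permutation (given by its window) on `ℤ^n`: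
`w(ε_i) = ε_{w(i)}` with `ε_{-i} = -ε_i`. -/
def wAct (n : ℕ) (w : List ℤ) (v : Fin n → ℤ) : Fin n → ℤ := fun r =>
  ∑ i : Fin n, ((if w.getD i 0 = ((r : ℕ) + 1 : ℤ) then v i else 0) +
    (if w.getD i 0 = -(((r : ℕ) + 1 : ℤ)) then -(v i) else 0))

def lamVec (n : ℕ) (lam : Fin n → ℕ) : Fin n → ℤ := fun i => (lam i : ℤ)

/-! ### Fillings of the doubled shape `\hat λ` -/

/-- A filling of the doubled shape, recorded by its primed columns `C'_{i,k}`
(`Cp i k`) and unprimed columns `C_{i,j}` (`Cu i j`). -/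
structure Filling where
  Cp : ℕ → ℕ → List ℤ
  Cu : ℕ → ℕ → List ℤ

def validP (n : ℕ) (lam : Fin n → ℕ) (i k : ℕ) : Prop :=
  1 ≤ i ∧ i ≤ lamOne n lam ∧ 2 ≤ k ∧ k ≤ conj n lam i

def validU (n : ℕ) (lam : Fin n → ℕ) (i j : ℕ) : Prop :=
  1 ≤ i ∧ i ≤ lamOne n lam ∧ 1 ≤ j ∧ j ≤ conj n lam i ∧ (i = 1 → j = 1)

instance validP.dec (n : ℕ) (lam : Fin n → ℕ) (i k : ℕ) : Decidable (validP n lam i k) := by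
  unfold validP; infer_instance

instance validU.dec (n : ℕ) (lam : Fin n → ℕ) (i j : ℕ) : Decidable (validU n lam i j) := by
  unfold validU; infer_instance

/-- The right neighbour `C'_{i,k+1}` of `C'_{i,k}`, with the convention
`C'_{i,λ'_i+1} = C_{i,1}`. -/
def CpNxt (n : ℕ) (lam : Fin n → ℕ) (F : Filling) (i k : ℕ) : List ℤ :=
  if k < conj n lam i then F.Cp i (k + 1) else F.Cu i 1

/-- The right neighbour `C_{i,j+1}` of `C_{i,j}`, with the conventions
`C_{i,λ'_i+1} = C'_{i-1,2}` (if `λ'_{i-1} > 1`) and `C_{i,λ'_i+1} = C_{i-1,1}`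
(if `λ'_{i-1} = 1`). -/
def CuNxt (n : ℕ) (lam : Fin n → ℕ) (F : Filling) (i j : ℕ) : List ℤ :=
  if j < conj n lam i then F.Cu i (j + 1)
  else if 2 ≤ conj n lam (i - 1) then F.Cp (i - 1) 2 else F.Cu (i - 1) 1

/-- No two entries `a, b` of a column with `a = ±b`. -/
def colDistinct (c : List ℤ) : Prop :=
  ∀ p q : ℕ, p < q → q < c.length →
    c.getD p 0 ≠ c.getD q 0 ∧ c.getD p 0 ≠ -(c.getD q 0)

/-- `R = (r_1 < r_2 < ... < r_p)` with `1 ≤ r_t < j ≤ d`. -/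
def sortedR (R : List ℕ) (j d : ℕ) : Prop :=
  List.Chain' (· < ·) R ∧ (∀ r ∈ R, 1 ≤ r ∧ r < j) ∧ 1 ≤ j ∧ j ≤ d

/-- `D (r_1,-j) (r_2,-j) ⋯ (r_p,-j)`. -/
def cycleApply (D : List ℤ) (R : List ℕ) (j : ℕ) : List ℤ :=
  R.foldl (fun E r => applyRefl E (r, -(j : ℤ))) D

/-- The relation between `C_{i,j+1}[1,λ'_i] = E` and `C_{i,j} = D` in a filling:
`E` differs from `D' = D(r_1,-j)⋯(r_p,-j)` only in position `j`,
`E(j) ∉ {±D'(r) : r ≠ j}` and `E(j) ⪯ D'(j)`. -/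
def unprimedTrans (D E : List ℤ) (R : List ℕ) (j d : ℕ) : Prop :=
  (∀ r, 1 ≤ r → r ≤ d → r ≠ j →
    E.getD (r - 1) 0 = (cycleApply D R j).getD (r - 1) 0) ∧
  (∀ r, 1 ≤ r → r ≤ d → r ≠ j →
    E.getD (j - 1) 0 ≠ (cycleApply D R j).getD (r - 1) 0 ∧
    E.getD (j - 1) 0 ≠ -((cycleApply D R j).getD (r - 1) 0)) ∧
  sle (E.getD (j - 1) 0) ((cycleApply D R j).getD (j - 1) 0)

/-- The set `F(λ)` of fillings of the doubled shape `\hat λ`. -/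
def FSet (n : ℕ) (lam : Fin n → ℕ) : Set Filling :=
  {F |
    -- shape
    (∀ i k, (validP n lam i k → (F.Cp i k).length = conj n lam i) ∧
      (¬ validP n lam i k → F.Cp i k = [])) ∧
    (∀ i j, (validU n lam i j → (F.Cu i j).length = conj n lam i) ∧
      (¬ validU n lam i j → F.Cu i j = [])) ∧
    -- entries lie in `{±1, ..., ±n}`
    (∀ i k, validP n lam i k → ∀ a ∈ F.Cp i k, 1 ≤ a.natAbs ∧ a.natAbs ≤ n) ∧
    (∀ i j, validU n lam i j → ∀ a ∈ F.Cu i j, 1 ≤ a.natAbs ∧ a.natAbs ≤ n) ∧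
    -- (1) rows weakly decrease from left to right
    (∀ i k, validP n lam i k → ∀ r, 1 ≤ r → r ≤ conj n lam i →
      sle ((CpNxt n lam F i k).getD (r - 1) 0) ((F.Cp i k).getD (r - 1) 0)) ∧
    (∀ i j, 2 ≤ i → validU n lam i j → ∀ r, 1 ≤ r → r ≤ conj n lam i →
      sle ((CuNxt n lam F i j).getD (r - 1) 0) ((F.Cu i j).getD (r - 1) 0)) ∧
    -- (2) no column contains `a, b` with `a = ±b`
    (∀ i k, validP n lam i k → colDistinct (F.Cp i k)) ∧
    (∀ i j, validU n lam i j → colDistinct (F.Cu i j)) ∧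
    -- (3) primed transitions: `C'_{i,k+1} = C'_{i,k}(r_1,-k)⋯(r_p,-k)`
    (∀ i k, validP n lam i k → ∃ R : List ℕ, sortedR R k (conj n lam i) ∧
      CpNxt n lam F i k = cycleApply (F.Cp i k) R k) ∧
    -- (3) unprimed transitions
    (∀ i j, 2 ≤ i → validU n lam i j → ∃ R : List ℕ, sortedR R j (conj n lam i) ∧
      unprimedTrans (F.Cu i j) ((CuNxt n lam F i j).take (conj n lam i)) R j (conj n lam i))}

/-! ### The filling map `f` -/

/-- Offset in `Γ` of the beginning of block `Γ^i` (the blocks are listed for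
`i = λ_1` down to `1`). -/
def offsetBlock (n : ℕ) (lam : Fin n → ℕ) (i : ℕ) : ℕ :=
  ∑ r ∈ Finset.Ico (i + 1) (lamOne n lam + 1), (gammaChain n (conj n lam r)).length

/-- Offset in `Γ` of the beginning of the factor `Γ'_{i,k}`.-/
def offsetP (n : ℕ) (lam : Fin n → ℕ) (i k : ℕ) : ℕ :=
  offsetBlock n lam i + ∑ j ∈ Finset.Ico 2 k, (gammaPrime j).length

/-- Offset in `Γ` of the beginning of the factor `Γ_{i,j}`.-/
def offsetU (n : ℕ) (lam : Fin n → ℕ) (i j : ℕ) : ℕ :=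
  offsetBlock n lam i + (∑ k ∈ Finset.Ico 2 (conj n lam i + 1), (gammaPrime k).length)
    + ∑ j' ∈ Finset.Ico 1 j, (gammaJK n j' (conj n lam i)).length

/-- `π = w ⋅ (all selected reflections at positions < off)`. -/
def piW (n : ℕ) (lam : Fin n → ℕ) (w : List ℤ) (J : Finset ℕ) (off : ℕ) : List ℤ :=
  applyAll w (selChain (lambdaChain n lam) (J.filter (fun x => x < off)))

/-- The filling map `f`, sending an (admissible) pair `(w, J)` to a filling of
the doubled shape `\hat λ`. -/
def fMap (n : ℕ) (lam : Fin n → ℕ) (w : List ℤ) (J : Finset ℕ) : Filling where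
  Cp := fun i k => if validP n lam i k
    then (piW n lam w J (offsetP n lam i k)).take (conj n lam i) else []
  Cu := fun i j => if validU n lam i j
    then (piW n lam w J (offsetU n lam i j)).take (conj n lam i) else []

/-! ### Content of a filling -/

/-- The columns `\bar{C}^i = C'_{i,2} C_{i,1}` (left to right, `i = λ_1, ..., 1`)
of the compressed filling `\barσ` of shape `2λ`; by the conventions,
`C'_{i,2} = C_{i,1}` when `λ'_i = 1`. -/
def compCols (n : ℕ) (lam : Fin n → ℕ) (F : Filling) : List (List ℤ) :=
  ((List.range (lamOne n lam)).map (fun t =>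
    [(if 2 ≤ conj n lam (lamOne n lam - t) then F.Cp (lamOne n lam - t) 2
      else F.Cu (lamOne n lam - t) 1), F.Cu (lamOne n lam - t) 1])).flatten

/-- The content of a list of columns: the `i`-th coordinate is half the
difference between the numbers of occurrences of `i` and of `-i`. -/
def ctCols (n : ℕ) (cols : List (List ℤ)) : Fin n → ℚ := fun r =>
  ((cols.flatten.count (((r : ℕ) + 1 : ℕ) : ℤ) : ℚ) -
    (cols.flatten.count (-(((r : ℕ) + 1 : ℕ) : ℤ)) : ℚ)) / 2

/-- The content `ct(σ)` of a filling `σ` of `\hatλ`. -/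
def ctQ (n : ℕ) (lam : Fin n → ℕ) (F : Filling) : Fin n → ℚ :=
  ctCols n (compCols n lam F)

/-! ### The statistics `N(D,C)` and `des(D,C)` -/

/-- `σ_{ab} = 1` if `a` and `b` are both negative, else `0`. -/
def sigmaAB (a b : ℤ) : ℕ := if a < 0 ∧ b < 0 then 1 else 0

def allEntries (n : ℕ) : List ℤ :=
  (List.range n).map (fun r => ((r + 1 : ℕ) : ℤ)) ++
    (List.range n).map (fun r => -((r + 1 : ℕ) : ℤ))

/-- Case 1: `N(D, D(r,-j)) = N_{\bar b, a}(D[r+1,j-1]) +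
#{c : \bar b ≺ c ≺ a, c ∉ ±D[1,j]} + σ_{ab}` where `a = D(r)`, `b = D(j)`. -/
def N1 (n : ℕ) (D : List ℤ) (r j : ℕ) : ℕ :=
  Nab (-(D.getD (j - 1) 0)) (D.getD (r - 1) 0) (word D (r + 1) (j - 1)) +
  ((allEntries n).filter (fun c => decide (slt (-(D.getD (j - 1) 0)) c ∧
    slt c (D.getD (r - 1) 0) ∧ c ∉ D.take j ∧ c ∉ (D.take j).map (fun x => -x)))).length +
  sigmaAB (D.getD (r - 1) 0) (D.getD (j - 1) 0)

/-- Case 2: `N(D, D(r_1,-j)⋯(r_p,-j)) = ∑ N(D_{t-1}, D_t)`. -/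
def cycleN (n : ℕ) : List ℤ → List ℕ → ℕ → ℕ
  | _, [], _ => 0
  | D, r :: rs, j => N1 n D r j + cycleN n (applyRefl D (r, -(j : ℤ))) rs j

/-- The possible values `(N(D,C), des(D,C))` arising from the case-by-case
definition of the statistics (cases 0, 2, 3; case 1 is case 2 with `p = 1`).
If `C` is one box taller than `D`, `C` is replaced by `C[1,d]`. -/
def NdesCand (n : ℕ) (D C : List ℤ) : Set (ℕ × ℕ) :=
  {x |
    (C.take D.length = D ∧ x = (0, 0)) ∨
    (∃ j R, sortedR R j D.length ∧ R ≠ [] ∧ C.take D.length = cycleApply D R j ∧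
      x = (cycleN n D R j, R.length)) ∨
    (∃ j R, sortedR R j D.length ∧
      (∀ r, 1 ≤ r → r ≤ D.length → r ≠ j →
        (C.take D.length).getD (r - 1) 0 = (cycleApply D R j).getD (r - 1) 0) ∧
      (∀ r, 1 ≤ r → r ≤ D.length → r ≠ j →
        (C.take D.length).getD (j - 1) 0 ≠ (cycleApply D R j).getD (r - 1) 0 ∧
        (C.take D.length).getD (j - 1) 0 ≠ -((cycleApply D R j).getD (r - 1) 0)) ∧
      slt ((C.take D.length).getD (j - 1) 0) ((cycleApply D R j).getD (j - 1) 0) ∧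
      x = (cycleN n D R j +
        Nab ((C.take D.length).getD (j - 1) 0) ((cycleApply D R j).getD (j - 1) 0)
          (word D (j + 1) D.length), R.length + 1))}

noncomputable def Nstat (n : ℕ) (D C : List ℤ) : ℕ :=
  sInf {v | ∃ d, (v, d) ∈ NdesCand n D C}

noncomputable def desStat (n : ℕ) (D C : List ℤ) : ℕ :=
  sInf {d | ∃ v, (v, d) ∈ NdesCand n D C}

/-- All columns of a filling of `\hatλ`, listed from left to right. -/
def colList (n : ℕ) (lam : Fin n → ℕ) (F : Filling) : List (List ℤ) :=
  ((List.range (lamOne n lam)).map (fun t =>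
    ((List.range (conj n lam (lamOne n lam - t) - 1)).map
      (fun s => F.Cp (lamOne n lam - t) (s + 2))) ++
    (if lamOne n lam - t = 1 then [F.Cu 1 1]
     else (List.range (conj n lam (lamOne n lam - t))).map
      (fun s => F.Cu (lamOne n lam - t) (s + 1))))).flatten

/-- Sum of a binary statistic over adjacent pairs of a list. -/
def adjSumN (f : List ℤ → List ℤ → ℕ) : List (List ℤ) → ℕ
  | a :: b :: rest => f a b + adjSumN f (b :: rest)
  | _ => 0

/-- `N(σ) = ∑_{i=1}^{m-1} N(C_{i+1}, C_i) + ℓ₊(C_1)`. -/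
noncomputable def Nsigma (n : ℕ) (lam : Fin n → ℕ) (F : Filling) : ℕ :=
  adjSumN (Nstat n) (colList n lam F) + lplus ((colList n lam F).getLastD [])

/-- `des(σ) = ∑_{i=1}^{m-1} des(C_{i+1}, C_i)`. -/
noncomputable def desSigma (n : ℕ) (lam : Fin n → ℕ) (F : Filling) : ℕ :=
  adjSumN (desStat n) (colList n lam F)

/-! ### Statistics on fillings of the plain shape `λ` (for Proposition 2.2) -/

/-- The descent statistic of a filling of the Young diagram of `λ`, whose
columns are listed from left to right. -/
def desTau (cols : List (List ℤ)) : ℕ :=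
  adjSumN (fun L R => ((Finset.range L.length).filter
    (fun r => slt (R.getD r 0) (L.getD r 0))).card) cols

/-- The complementary inversion statistic `cinv = n(λ) - inv` of a filling of
the Young diagram of `λ` (columns listed from left to right, `C_k` being the
`k`-th column from the right). -/
def cinvTau (cols : List (List ℤ)) : ℕ :=
  ∑ q ∈ Finset.range cols.length,
    (((Finset.range (cols.getD q []).length) ×ˢ (Finset.range (cols.getD q []).length)).filter
      (fun pp => pp.1 < pp.2 ∧
        (((1 ≤ q ∧ pp.2 < (cols.getD (q - 1) []).length) ∧
            slt ((cols.getD q []).getD pp.2 0) ((cols.getD q []).getD pp.1 0) ∧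
            slt ((cols.getD q []).getD pp.1 0) ((cols.getD (q - 1) []).getD pp.2 0)) ∨
          (¬ (1 ≤ q ∧ pp.2 < (cols.getD (q - 1) []).length) ∧
            slt ((cols.getD q []).getD pp.2 0) ((cols.getD q []).getD pp.1 0))))).card

/-! ### Chains for the root systems `C_n` and `B_n` and the conditions (R1), (R2) -/

def isPosRootC (n : ℕ) (β : ℕ × ℤ) : Prop :=
  (1 ≤ β.1 ∧ (β.1 : ℤ) < β.2 ∧ β.2 ≤ (n : ℤ)) ∨
  (1 ≤ β.1 ∧ 0 < -β.2 ∧ (β.1 : ℤ) ≤ -β.2 ∧ -β.2 ≤ (n : ℤ))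

/-- Positive roots of `B_n` use the same symbols; `(i,-i)` encodes `ε_i`. -/
def isPosRootB (n : ℕ) (β : ℕ × ℤ) : Prop := isPosRootC n β

/-- The root of type `B_n` of a symbol: as in type `C` except `(i,-i) ↦ ε_i`. -/
def rootVecB (n : ℕ) (β : ℕ × ℤ) : Fin n → ℤ :=
  if β.2 = -(β.1 : ℤ) then (fun r => if ((r : ℕ) + 1 : ℤ) = (β.1 : ℤ) then 1 else 0)
  else rootVec n β

/-- The coroot of type `B_n`: `ε_i^∨ = 2ε_i`, long roots unchanged. -/
def corootVecB (n : ℕ) (β : ℕ × ℤ) : Fin n → ℤ :=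
  if β.2 = -(β.1 : ℤ) then (fun r => if ((r : ℕ) + 1 : ℤ) = (β.1 : ℤ) then 2 else 0)
  else rootVec n β

/-- `ω_k` in type `C_n`. -/
def omegaC (n k : ℕ) : Fin n → ℤ := fun r => if (r : ℕ) + 1 ≤ k then 1 else 0

/-- `ω_k` in type `B_n` (`ω_n` is half the sum of the `ε_i`). -/
def omegaB (n k : ℕ) : Fin n → ℚ :=
  if k = n then (fun _ => 1/2) else (fun r => if (r : ℕ) + 1 ≤ k then 1 else 0)

/-- type `B`: `Γ'_j = ((1,-j),...,(j-1,-j),(j))`. -/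
def gammaPrimeB (j : ℕ) : List (ℕ × ℤ) := gammaPrime j ++ [(j, -(j : ℤ))]

/-- type `B`: `Γ(k) = Γ'_1 ⋯ Γ'_k Γ_1(k) ⋯ Γ_k(k)` for `k < n`, and
`Γ(n) = Γ'_1 ⋯ Γ'_n`. -/
def gammaChainB (n k : ℕ) : List (ℕ × ℤ) :=
  ((List.range k).map (fun r => gammaPrimeB (r + 1))).flatten
    ++ (if k = n then [] else ((List.range k).map (fun r => gammaJK n (r + 1) k)).flatten)

/-- `(R2)`: the subsequence of all occurrences of `α, β, γ` is a concatenation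
of consecutive pairs `(γ, α)` or `(γ, β)`. -/
def altPairs (g a b : ℕ × ℤ) : List (ℕ × ℤ) → Prop
  | [] => True
  | [_] => False
  | x :: y :: rest => x = g ∧ (y = a ∨ y = b) ∧ altPairs g a b rest

/-! ### Real vector space versions (for hyperplanes) -/

def ipR (n : ℕ) (u v : Fin n → ℝ) : ℝ := ∑ r, u r * v r

def affReflR (n : ℕ) (β : ℕ × ℤ) (c : ℝ) (v : Fin n → ℝ) : Fin n → ℝ :=
  fun r => v r - (ipR n v (fun s => ((corootVec n β s : ℤ) : ℝ)) - c) *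
    ((rootVec n β r : ℤ) : ℝ)

def wActR (n : ℕ) (w : List ℤ) (v : Fin n → ℝ) : Fin n → ℝ := fun r =>
  ∑ i : Fin n, ((if w.getD i 0 = ((r : ℕ) + 1 : ℤ) then v i else 0) +
    (if w.getD i 0 = -(((r : ℕ) + 1 : ℤ)) then -(v i) else 0))

/-- `γ^∨ = (2/⟨γ,γ⟩) γ`. -/
noncomputable def corootOfR (n : ℕ) (v : Fin n → ℝ) : Fin n → ℝ :=
  fun r => (2 / ipR n v v) * v r

/-- The part of the compressed filling of shape `2λ` consisting of the columns
numbered `2λ_1, 2λ_1 - 1, ..., q` (`\barσ[q]`); column `2i` is `C'_{i,2}` and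
column `2i-1` is `C_{i,1}`. -/
def compColsGe (n : ℕ) (lam : Fin n → ℕ) (F : Filling) (q : ℕ) : List (List ℤ) :=
  ((List.range (lamOne n lam)).map (fun t =>
    (if q ≤ 2 * (lamOne n lam - t) then
      [(if 2 ≤ conj n lam (lamOne n lam - t) then F.Cp (lamOne n lam - t) 2
        else F.Cu (lamOne n lam - t) 1)] else []) ++
    (if q ≤ 2 * (lamOne n lam - t) - 1 then [F.Cu (lamOne n lam - t) 1] else []))).flatten

/-! ### The chains `Δ` and `Φ` of Section 6 -/

/-- `Δ = ((1,p+1),...,(1,n),(1,-1),(1,-n),(1,-(n-1)),...,(1,-(p+1)))`. -/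
def deltaChain (n p : ℕ) : List (ℕ × ℤ) :=
  (List.range (n - p)).map (fun r => (1, ((p + 1 + r : ℕ) : ℤ)))
    ++ [(1, (-1 : ℤ))]
    ++ (List.range (n - p)).map (fun r => (1, -((n - r : ℕ) : ℤ)))

/-- The suffix `Δ_{\bar s}` of `Δ` beginning with `(1,-s)`. -/
def deltaSuffixNeg (p s : ℕ) : List (ℕ × ℤ) :=
  (List.range (s - p)).map (fun r => (1, -((s - r : ℕ) : ℤ)))

/-- The suffix `Δ_{\bar 1}` of `Δ` beginning with `(1,-1)`. -/
def deltaSuffixBar1 (n p : ℕ) : List (ℕ × ℤ) :=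
  [(1, (-1 : ℤ))] ++ (List.range (n - p)).map (fun r => (1, -((n - r : ℕ) : ℤ)))

/-- The suffix `Δ_s` of `Δ` beginning with `(1,s)` (for `p < s ≤ n`). -/
def deltaSuffixPos (n p s : ℕ) : List (ℕ × ℤ) :=
  (List.range (n + 1 - s)).map (fun r => (1, ((s + r : ℕ) : ℤ)))
    ++ [(1, (-1 : ℤ))]
    ++ (List.range (n - p)).map (fun r => (1, -((n - r : ℕ) : ℤ)))

/-- `Φ = ((1,-1),(1,-2),(2,-2),...,(1,-n),...,(n-1,-n),(n,-n))`. -/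
def phiChain (n : ℕ) : List (ℕ × ℤ) :=
  ((List.range n).map (fun jm =>
    (List.range (jm + 1)).map (fun im => (im + 1, -((jm + 1 : ℕ) : ℤ))))).flatten

/-- The suffix `Φ_{ij}` of `Φ` beginning with `(i,-j)`. -/
def phiSuffix (n i j : ℕ) : List (ℕ × ℤ) := (phiChain n).drop ((j - 1) * j / 2 + (i - 1))

/-- `ℓ^{ij}_-(w) = #{(k,l) : k ≤ l, (k,-l)` strictly precedes `(i,-j)` in `Φ`,
`w(k) ≻ -w(l)}`. -/
def lminusBefore (w : List ℤ) (i j : ℕ) : ℕ :=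
  (((Finset.range w.length) ×ˢ (Finset.range w.length)).filter
    (fun p => p.1 ≤ p.2 ∧ (p.2 + 1 < j ∨ (p.2 + 1 = j ∧ p.1 + 1 < i)) ∧
      slt (-(w.getD p.2 0)) (w.getD p.1 0))).card


/-! ### Length -/

/-- Contribution to the length of the pair of letters `x, y`, in this order. -/
def pairInv (x y : ℤ) : ℕ := (if slt y x then 1 else 0) + (if slt (-y) x then 1 else 0)

/-- Contribution to the length of a single letter: `1` iff it is negative. -/
def selfInv (x : ℤ) : ℕ := if slt (-x) x then 1 else 0

lemma sum_range_getD (f : ℤ → ℕ) (u : List ℤ) :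
    ∑ i ∈ Finset.range u.length, f (u.getD i 0) = (u.map f).sum := by
  induction u with
  | nil => simp
  | cons x u ih =>
    rw [List.length_cons, Finset.sum_range_succ']
    simp only [List.getD_cons_succ, List.getD_cons_zero, ih, List.map_cons, List.sum_cons]
    omega

lemma lplus_cons (x : ℤ) (u : List ℤ) :
    lplus (x :: u) = (u.map (fun y => if slt y x then 1 else 0)).sum + lplus u := by
  rw [← sum_range_getD]
  unfold lplus
  simp only [Finset.card_filter, Finset.sum_product, List.length_cons, Finset.sum_range_succ',
    List.getD_cons_succ, List.getD_cons_zero, add_lt_add_iff_right]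
  simp
  omega

lemma lminus_cons (x : ℤ) (u : List ℤ) :
    lminus (x :: u) =
      selfInv x + (u.map (fun y => if slt (-y) x then 1 else 0)).sum + lminus u := by
  rw [← sum_range_getD]
  unfold lminus selfInv
  simp only [Finset.card_filter, Finset.sum_product, List.length_cons, Finset.sum_range_succ',
    List.getD_cons_succ, List.getD_cons_zero, add_le_add_iff_right]
  simp
  omega

lemma len_cons (x : ℤ) (u : List ℤ) :
    len (x :: u) = selfInv x + (u.map (pairInv x)).sum + len u := by
  unfold len
  rw [lplus_cons, lminus_cons]
  have : (u.map (pairInv x)).sum = (u.map (fun y => if slt y x then 1 else 0)).sum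
      + (u.map (fun y => if slt (-y) x then 1 else 0)).sum := by
    rw [← List.sum_map_add]; rfl
  omega

/-- Replacing one letter changes the length only through the pairs containing it. -/
lemma len_replace (u₁ u₂ : List ℤ) (d e : ℤ) :
    len (u₁ ++ d :: u₂) + ((u₁.map (fun x => pairInv x e)).sum + selfInv e
        + (u₂.map (pairInv e)).sum)
      = len (u₁ ++ e :: u₂) + ((u₁.map (fun x => pairInv x d)).sum + selfInv d
        + (u₂.map (pairInv d)).sum) := by
  induction u₁ with
  | nil => simp only [List.nil_append, len_cons, List.map_nil, List.sum_nil]; omega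
  | cons x u₁ ih =>
    simp only [List.cons_append, len_cons, List.map_cons, List.sum_cons, List.map_append,
      List.sum_append] at ih ⊢
    omega

/-- Windows with nonzero letters that are pairwise distinct in absolute value. -/
def Good (w : List ℤ) : Prop := (∀ x ∈ w, x ≠ 0) ∧ (w.map Int.natAbs).Nodup

lemma Nab_nil (a b : ℤ) : Nab a b [] = 0 := rfl

lemma Nab_cons (a b x : ℤ) (u : List ℤ) :
    Nab a b (x :: u) = (if slt a x ∧ slt x b then 1 else 0) + Nab a b u := by
  unfold Nab
  by_cases h : slt a x ∧ slt x b
  · simp [h]; omega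
  · simp [h]

lemma Nab_append (a b : ℤ) (u v : List ℤ) : Nab a b (u ++ v) = Nab a b u + Nab a b v := by
  simp [Nab]

lemma Good.tail_ne {a : ℤ} {u : List ℤ} (h : Good (a :: u)) :
    a ≠ 0 ∧ ∀ e ∈ u, e ≠ 0 ∧ e ≠ a ∧ e ≠ -a := by
  obtain ⟨h0, h1⟩ := h
  simp only [List.map_cons, List.nodup_cons, List.mem_map, not_exists, not_and] at h1
  refine ⟨h0 a (by simp), fun e he => ⟨h0 e (by simp [he]), ?_, ?_⟩⟩ <;>
  · rintro rfl
    exact h1.1 _ he (by simp)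

lemma Good.of_perm {w v : List ℤ} (h : Good w)
    (hp : (w.map Int.natAbs).Perm (v.map Int.natAbs)) : Good v := by
  refine ⟨fun x hx h0 => ?_, hp.nodup_iff.1 h.2⟩
  have : (0 : ℕ) ∈ w.map Int.natAbs := hp.mem_iff.2 (List.mem_map.2 ⟨x, hx, by simp [h0]⟩)
  obtain ⟨y, hy, hy0⟩ := List.mem_map.1 this
  exact h.1 y hy (by simpa using hy0)

lemma Good.swap {a d : ℤ} {u₁ u₂ : List ℤ} (h : Good (a :: (u₁ ++ d :: u₂))) :
    Good (d :: (u₁ ++ a :: u₂)) := by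
  refine h.of_perm (List.Perm.map _ ?_)
  refine (List.Perm.cons a List.perm_middle).trans ?_
  exact (List.Perm.swap d a _).trans (List.Perm.cons d List.perm_middle.symm)

lemma Good.neg_swap {a d : ℤ} {u₁ u₂ : List ℤ} (h : Good (a :: (u₁ ++ d :: u₂))) :
    Good (-d :: (u₁ ++ (-a) :: u₂)) :=
  h.swap.of_perm (by simp)

lemma Good.neg_head {a : ℤ} {u : List ℤ} (h : Good (a :: u)) : Good (-a :: u) :=
  h.of_perm (by simp)

lemma Good.letters {a d : ℤ} {u₁ u₂ : List ℤ} (h : Good (a :: (u₁ ++ d :: u₂))) :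
    a ≠ 0 ∧ d ≠ 0 ∧ d ≠ a ∧ d ≠ -a ∧
    (∀ e ∈ u₁, e ≠ 0 ∧ e ≠ a ∧ e ≠ -a ∧ e ≠ d ∧ e ≠ -d) ∧
    (∀ e ∈ u₂, e ≠ 0 ∧ e ≠ a ∧ e ≠ -a ∧ e ≠ d ∧ e ≠ -d) := by
  have h1 := h.tail_ne
  have h2 := h.swap.tail_ne
  refine ⟨h1.1, h2.1, (h1.2 d (by simp)).2.1, (h1.2 d (by simp)).2.2, ?_, ?_⟩ <;>
  · intro e he
    have e1 := h1.2 e (by simp [he])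
    have e2 := h2.2 e (by simp [he])
    tauto

/-- Adding up a letterwise identity `f e + 2 [a ≺ e ≺ b] = g e` along a word. -/
lemma sum_add_Nab (f g : ℤ → ℕ) (a b : ℤ) (u : List ℤ)
    (h : ∀ e ∈ u, f e + 2 * (if slt a e ∧ slt e b then 1 else 0) = g e) :
    (u.map f).sum + 2 * Nab a b u = (u.map g).sum := by
  induction u with
  | nil => simp [Nab_nil]
  | cons x u ih =>
    have h1 := h x (by simp)
    have h2 := ih (fun e he => h e (by simp [he]))
    simp only [List.map_cons, List.sum_cons, Nab_cons]
    omega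

lemma slt_trichotomy {a b : ℤ} (ha : a ≠ 0) (hb : b ≠ 0) (hab : a ≠ b) (h : ¬ slt a b) :
    slt b a := by
  unfold slt at *; omega

lemma slt_iff_not {a b : ℤ} (ha : a ≠ 0) (hb : b ≠ 0) (hab : a ≠ b) :
    slt a b ↔ ¬ slt b a := by
  unfold slt; omega

lemma slt_irrefl (a : ℤ) : ¬ slt a a := by unfold slt; omega

lemma slt_trans {a b c : ℤ} (h : slt a b) (h' : slt b c) : slt a c := by
  unfold slt at *; omega

lemma slt_asymm {a b : ℤ} (h : slt a b) (h' : slt b a) : False := by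
  unfold slt at *; omega

lemma slt_neg {a b : ℤ} : slt (-a) (-b) ↔ slt b a := by unfold slt; omega

lemma slt_neg_left {a b : ℤ} : slt (-a) b ↔ slt (-b) a := by unfold slt; omega

lemma slt_neg_right {a b : ℤ} : slt a (-b) ↔ slt b (-a) := by unfold slt; omega

/-- Length change under `(1,j)`. -/
lemma len_swap {a d : ℤ} {u₁ u₂ : List ℤ} (h : Good (a :: (u₁ ++ d :: u₂))) (had : slt a d) :
    len (d :: (u₁ ++ a :: u₂)) = len (a :: (u₁ ++ d :: u₂)) + 2 * Nab a d u₁ + 1 := by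
  obtain ⟨a0, d0, da, dna, h1, h2⟩ := h.letters
  have key := len_replace u₁ u₂ d a
  simp only [len_cons, List.map_append, List.sum_append, List.map_cons, List.sum_cons]
  have e1 : (u₁.map (fun e => pairInv a e + pairInv e d)).sum + 2 * Nab a d u₁
      = (u₁.map (fun e => pairInv d e + pairInv e a)).sum := by
    apply sum_add_Nab
    intro e he
    have := h1 e he
    simp only [pairInv]
    clear key h1 h2
    have q1 : slt (-d) e ↔ slt (-e) d := slt_neg_left
    have q2 : slt (-a) e ↔ slt (-e) a := slt_neg_left
    have q3 : slt e a ↔ ¬ slt a e := slt_iff_not (by omega) (by omega) (by omega)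
    have q4 : slt e d ↔ ¬ slt d e := slt_iff_not (by omega) (by omega) (by omega)
    have q5 : slt d e → slt a e := slt_trans had
    simp only [q1, q2, q3, q4]
    by_cases hA : slt a e <;> by_cases hD : slt d e <;> simp [hA, hD] <;> first | omega | tauto
  have e2 : pairInv d a = pairInv a d + 1 := by
    simp only [pairInv]
    have q1 : slt (-d) a ↔ slt (-a) d := slt_neg_left
    have q8 := @slt_asymm a d
    simp only [q1, if_pos had, if_neg (q8 had)]
    omega
  simp only [List.sum_map_add] at e1
  omega

/-- Length change under `(1,-j)`. -/
lemma len_neg_swap {a d : ℤ} {u₁ u₂ : List ℤ} (h : Good (a :: (u₁ ++ d :: u₂)))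
    (had : slt a (-d)) :
    len (-d :: (u₁ ++ (-a) :: u₂)) = len (a :: (u₁ ++ d :: u₂))
      + 2 * (Nab a (-d) u₁ + Nab a (-d) u₂ + Nab a (-d) (u₂.map (fun x => -x))
        + (if 0 < a ∧ 0 < d then 1 else 0)) + 1 := by
  obtain ⟨a0, d0, da, dna, h1, h2⟩ := h.letters
  have key := len_replace u₁ u₂ d (-a)
  simp only [len_cons, List.map_append, List.sum_append, List.map_cons, List.sum_cons]
  have e1 : (u₁.map (fun e => pairInv a e + pairInv e d)).sum + 2 * Nab a (-d) u₁
      = (u₁.map (fun e => pairInv (-d) e + pairInv e (-a))).sum := by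
    apply sum_add_Nab
    intro e he
    have := h1 e he
    simp only [pairInv, neg_neg]
    clear key h1 h2
    have q1 : slt (-e) (-d) ↔ slt d e := slt_neg
    have q2 : slt (-a) e ↔ slt (-e) a := slt_neg_left
    have q3 : slt e a ↔ ¬ slt a e := slt_iff_not (by omega) (by omega) (by omega)
    have q4 : slt e (-d) ↔ ¬ slt (-d) e := slt_iff_not (by omega) (by omega) (by omega)
    have q5 : slt (-d) e → slt a e := slt_trans had
    simp only [q1, q2, q3, q4]
    by_cases hA : slt a e <;> by_cases hD : slt (-d) e <;> simp [hA, hD] <;>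
      first | omega | tauto
  have e3 : (u₂.map (fun e => pairInv a e + pairInv d e)).sum + 2 * Nab a (-d) u₂
        + 2 * Nab a (-d) (u₂.map (fun x => -x))
      = (u₂.map (fun e => pairInv (-d) e + pairInv (-a) e)).sum := by
    clear key e1 h1
    induction u₂ with
    | nil => simp [Nab_nil]
    | cons e u ih =>
      have hg : Good (a :: (u₁ ++ d :: u)) := by
        refine ⟨fun x hx => h.1 x ?_, h.2.sublist ?_⟩
        · simp only [List.mem_cons, List.mem_append] at hx ⊢; tauto
        · apply List.Sublist.map
          simp
      have ih' := ih hg (fun e he => h2 e (by simp [he]))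
      have := h2 e (by simp)
      simp only [List.map_cons, List.sum_cons, Nab_cons]
      suffices hs : pairInv a e + pairInv d e + 2 * (if slt a e ∧ slt e (-d) then 1 else 0)
          + 2 * (if slt a (-e) ∧ slt (-e) (-d) then 1 else 0)
          = pairInv (-d) e + pairInv (-a) e by omega
      simp only [pairInv]
      clear ih ih' h2
      have r1 : slt (-e) (-d) ↔ slt d e := slt_neg
      have r2 : slt (-e) (-a) ↔ slt a e := slt_neg
      have r3 : slt e (-d) ↔ slt d (-e) := slt_neg_right
      have r4 : slt e (-a) ↔ slt a (-e) := slt_neg_right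
      have p1 : slt e a ↔ ¬ slt a e := slt_iff_not (by omega) (by omega) (by omega)
      have p2 : slt e d ↔ ¬ slt d e := slt_iff_not (by omega) (by omega) (by omega)
      have p3 : slt (-e) a ↔ ¬ slt a (-e) := slt_iff_not (by omega) (by omega) (by omega)
      have p4 : slt (-e) d ↔ ¬ slt d (-e) := slt_iff_not (by omega) (by omega) (by omega)
      -- a letter `± e` below `a` is below `-d`
      have t1 : slt e a → slt d (-e) := fun h => r3.1 (slt_trans h had)
      have t2 : slt (-e) a → slt d e := fun h => r1.1 (slt_trans h had)
      simp only [r1, r2, r3, r4, p1, p2, p3, p4] at t1 t2 ⊢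
      by_cases hA : slt a e <;> by_cases hD : slt d e <;> by_cases hA' : slt a (-e) <;>
        by_cases hD' : slt d (-e) <;> simp_all
  have e2 : pairInv (-d) (-a) = pairInv a d + 1 := by
    simp only [pairInv, neg_neg]
    have q1 : slt (-a) (-d) ↔ slt d a := slt_neg
    have q8 := @slt_asymm a (-d)
    simp only [q1, if_pos had, if_neg (q8 had)]
  have e4 : selfInv (-d) + selfInv (-a) =
      selfInv a + selfInv d + 2 * (if 0 < a ∧ 0 < d then 1 else 0) := by
    have s1 : ∀ x, slt (-x) x ↔ x < 0 := fun x => by unfold slt; omega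
    have s2 : ∀ x, slt x (-x) ↔ 0 < x := fun x => by unfold slt; omega
    have s3 : ¬ (a < 0 ∧ d < 0) := by unfold slt at had; omega
    simp only [selfInv, neg_neg, s1, s2]
    rcases lt_or_gt_of_ne a0 with ha | ha <;> rcases lt_or_gt_of_ne d0 with hd | hd <;>
      simp_all [ha.not_gt, hd.not_gt]
  simp only [List.sum_map_add] at e1 e3
  omega

/-- Length change under `(1,-1)`. -/
lemma len_neg_head {a : ℤ} {u : List ℤ} (h : Good (a :: u)) (ha : slt a (-a)) :
    len (-a :: u) = len (a :: u) + 2 * Nab a (-a) u + 1 := by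
  obtain ⟨a0, h1⟩ := h.tail_ne
  simp only [len_cons]
  have e1 : (u.map (pairInv a)).sum + 2 * Nab a (-a) u = (u.map (pairInv (-a))).sum := by
    apply sum_add_Nab
    intro e he
    have := h1 e he
    simp only [pairInv]
    have r2 : slt (-e) (-a) ↔ slt a e := slt_neg
    have r4 : slt e (-a) ↔ slt a (-e) := slt_neg_right
    have p1 : slt e a ↔ ¬ slt a e := slt_iff_not (by omega) (by omega) (by omega)
    have p3 : slt (-e) a ↔ ¬ slt a (-e) := slt_iff_not (by omega) (by omega) (by omega)
    have t1 : slt e a → slt a (-e) := fun h => r4.1 (slt_trans h ha)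
    simp only [r2, r4, p1, p3] at t1 ⊢
    by_cases hA : slt a e <;> by_cases hA' : slt a (-e) <;> simp_all
  have e2 : selfInv (-a) = selfInv a + 1 := by
    have : ¬ slt (-a) a := slt_asymm ha
    simp [selfInv, ha, this]
  omega

/-! ### Reflections and the weighted sum over chains -/

lemma applyRefl_pos (a d : ℤ) (u₁ u₂ : List ℤ) {j : ℕ} (hj : j = u₁.length + 2) :
    applyRefl (a :: (u₁ ++ d :: u₂)) (1, (j : ℤ)) = d :: (u₁ ++ a :: u₂) := by
  subst hj
  have h1 : (0 : ℤ) < ((u₁.length + 2 : ℕ) : ℤ) := by positivity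
  simp only [applyRefl, if_pos h1, Int.toNat_natCast]
  simp

lemma applyRefl_neg (a d : ℤ) (u₁ u₂ : List ℤ) {j : ℕ} (hj : j = u₁.length + 2) :
    applyRefl (a :: (u₁ ++ d :: u₂)) (1, -(j : ℤ)) = -d :: (u₁ ++ (-a) :: u₂) := by
  subst hj
  have h1 : ¬ (0 : ℤ) < -((u₁.length + 2 : ℕ) : ℤ) := by omega
  have h2 : ¬ 1 = u₁.length + 2 := by omega
  simp only [applyRefl, if_neg h1, neg_neg, Int.toNat_natCast, if_neg h2]
  simp

lemma applyRefl_bar (a : ℤ) (u : List ℤ) : applyRefl (a :: u) (1, -1) = -a :: u := by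
  simp [applyRefl]

/-- The sum of `t ^ ((ℓ(wT) - ℓ(w) - |T|) / 2) (1 - t) ^ |T|` over the increasing-admissible
subsequences `T` of a chain with `(wT)(1) = b`, computed by deciding for one reflection after the
other whether it belongs to `T`. -/
noncomputable def chainSum (b : ℤ) : List (ℕ × ℤ) → List ℤ → Polynomial ℤ
  | [], w => if w.getD 0 0 = b then 1 else 0
  | t :: L, w => chainSum b L w +
      if len w < len (applyRefl w t) then
        (Polynomial.X : Polynomial ℤ) ^ ((len (applyRefl w t) - len w - 1) / 2) *
          (1 - Polynomial.X) * chainSum b L (applyRefl w t)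
      else 0

lemma chainSum_nil (b a : ℤ) (u : List ℤ) :
    chainSum b [] (a :: u) = if a = b then 1 else 0 := by simp [chainSum]

lemma chainSum_pos (b : ℤ) (L : List (ℕ × ℤ)) {a d : ℤ} {u₁ u₂ : List ℤ}
    (h : Good (a :: (u₁ ++ d :: u₂))) {j : ℕ} (hj : j = u₁.length + 2) :
    chainSum b ((1, (j : ℤ)) :: L) (a :: (u₁ ++ d :: u₂)) =
      chainSum b L (a :: (u₁ ++ d :: u₂)) +
      if slt a d then (Polynomial.X : Polynomial ℤ) ^ (Nab a d u₁) * (1 - Polynomial.X) *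
        chainSum b L (d :: (u₁ ++ a :: u₂)) else 0 := by
  rw [chainSum, applyRefl_pos a d u₁ u₂ hj]
  obtain ⟨a0, d0, da, -, -⟩ := h.letters
  by_cases had : slt a d
  · have e := len_swap h had
    rw [if_pos had, if_pos (by omega), show (len (d :: (u₁ ++ a :: u₂))
      - len (a :: (u₁ ++ d :: u₂)) - 1) / 2 = Nab a d u₁ by omega]
  · have e := len_swap h.swap (slt_trichotomy a0 d0 da.symm had)
    rw [if_neg had, if_neg (by omega)]

lemma chainSum_neg (b : ℤ) (L : List (ℕ × ℤ)) {a d : ℤ} {u₁ u₂ : List ℤ}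
    (h : Good (a :: (u₁ ++ d :: u₂))) {j : ℕ} (hj : j = u₁.length + 2) :
    chainSum b ((1, -(j : ℤ)) :: L) (a :: (u₁ ++ d :: u₂)) =
      chainSum b L (a :: (u₁ ++ d :: u₂)) +
      if slt a (-d) then (Polynomial.X : Polynomial ℤ) ^ (Nab a (-d) u₁ + Nab a (-d) u₂
        + Nab a (-d) (u₂.map (fun x => -x)) + (if 0 < a ∧ 0 < d then 1 else 0)) *
        (1 - Polynomial.X) * chainSum b L (-d :: (u₁ ++ (-a) :: u₂)) else 0 := by
  rw [chainSum, applyRefl_neg a d u₁ u₂ hj]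
  obtain ⟨a0, d0, da, dna, -⟩ := h.letters
  by_cases had : slt a (-d)
  · have e := len_neg_swap h had
    rw [if_pos had, if_pos (by omega)]
    congr 4
    omega
  · have e := len_neg_swap h.neg_swap (by
      rw [neg_neg]; exact slt_trichotomy a0 (neg_ne_zero.2 d0) (by omega) had)
    simp only [neg_neg] at e
    rw [if_neg had, if_neg (by omega)]

lemma chainSum_bar (b : ℤ) (L : List (ℕ × ℤ)) {a : ℤ} {u : List ℤ} (h : Good (a :: u)) :
    chainSum b ((1, -1) :: L) (a :: u) = chainSum b L (a :: u) +
      if slt a (-a) then (Polynomial.X : Polynomial ℤ) ^ (Nab a (-a) u) * (1 - Polynomial.X) *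
        chainSum b L (-a :: u) else 0 := by
  rw [chainSum, applyRefl_bar]
  obtain ⟨a0, -⟩ := h.tail_ne
  by_cases ha : slt a (-a)
  · have e := len_neg_head h ha
    rw [if_pos ha, if_pos (by omega), show (len (-a :: u) - len (a :: u) - 1) / 2
      = Nab a (-a) u by omega]
  · have e := len_neg_head h.neg_head (by
      rw [neg_neg]; exact slt_trichotomy a0 (neg_ne_zero.2 a0) (by omega) ha)
    simp only [neg_neg] at e
    rw [if_neg ha, if_neg (by omega)]

/-- The reflections of `B_n` that move position `1`. -/
def OkRefl (n : ℕ) (t : ℕ × ℤ) : Prop :=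
  t = (1, -1) ∨ ∃ j : ℕ, 2 ≤ j ∧ j ≤ n ∧ (t = (1, (j : ℤ)) ∨ t = (1, -(j : ℤ)))

lemma exists_split {u : List ℤ} {j : ℕ} (h2 : 2 ≤ j) (hj : j ≤ u.length + 1) :
    ∃ u₁ d u₂, u = u₁ ++ d :: u₂ ∧ j = u₁.length + 2 := by
  refine ⟨u.take (j - 2), u[j - 2]'(by omega), u.drop (j - 1), ?_, ?_⟩
  · have : j - 1 = j - 2 + 1 := by omega
    rw [this, List.getElem_cons_drop, List.take_append_drop]
  · rw [List.length_take]; omega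

/-- A reflection moving position `1` sends windows to windows; if it increases the length, then it
increases the first letter and the length grows by an odd number. -/
lemma refl_step {n : ℕ} {t : ℕ × ℤ} (ht : OkRefl n t) {a : ℤ} {u : List ℤ}
    (h : Good (a :: u)) (hn : u.length + 1 = n) :
    ∃ a' u', applyRefl (a :: u) t = a' :: u' ∧ Good (a' :: u') ∧ u'.length + 1 = n ∧
      (len (a :: u) < len (a' :: u') →
        slt a a' ∧ ∃ k, len (a' :: u') = len (a :: u) + 2 * k + 1) := by
  rcases ht with rfl | ⟨j, h2, hj, ht⟩
  · refine ⟨_, _, applyRefl_bar a u, h.neg_head, hn, fun hlt => ?_⟩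
    obtain ⟨a0, -⟩ := h.tail_ne
    by_cases ha : slt a (-a)
    · exact ⟨ha, _, len_neg_head h ha⟩
    · have e := len_neg_head h.neg_head (by
        rw [neg_neg]; exact slt_trichotomy a0 (neg_ne_zero.2 a0) (by omega) ha)
      simp only [neg_neg] at e
      omega
  · obtain ⟨u₁, d, u₂, rfl, hju⟩ := exists_split h2 (by omega : j ≤ u.length + 1)
    obtain ⟨a0, d0, da, dna, -⟩ := h.letters
    rcases ht with rfl | rfl
    · refine ⟨_, _, applyRefl_pos a d u₁ u₂ hju, h.swap, by simpa using hn, fun hlt => ?_⟩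
      by_cases had : slt a d
      · exact ⟨had, _, len_swap h had⟩
      · have e := len_swap h.swap (slt_trichotomy a0 d0 da.symm had)
        omega
    · refine ⟨_, _, applyRefl_neg a d u₁ u₂ hju, h.neg_swap, by simpa using hn, fun hlt => ?_⟩
      by_cases had : slt a (-d)
      · exact ⟨had, _, len_neg_swap h had⟩
      · have e := len_neg_swap h.neg_swap (by
          rw [neg_neg]; exact slt_trichotomy a0 (neg_ne_zero.2 d0) (by omega) had)
        simp only [neg_neg] at e
        omega

/-- The first letter never decreases, so it cannot reach a smaller `b`. -/
lemma chainSum_of_gt {n : ℕ} {b : ℤ} {L : List (ℕ × ℤ)} (hL : ∀ t ∈ L, OkRefl n t) :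
    ∀ {a : ℤ} {u : List ℤ}, Good (a :: u) → u.length + 1 = n → slt b a →
      chainSum b L (a :: u) = 0 := by
  induction L with
  | nil =>
    intro a u _ _ hba
    rw [chainSum_nil, if_neg]
    rintro rfl
    exact slt_irrefl _ hba
  | cons t L ih =>
    intro a u h hn hba
    have hL' : ∀ t ∈ L, OkRefl n t := fun t ht => hL t (by simp [ht])
    obtain ⟨a', u', e, h', hn', hstep⟩ := refl_step (hL t (by simp)) h hn
    rw [chainSum, e, ih hL' h hn hba, zero_add]
    split_ifs with hlt
    · rw [ih hL' h' hn' (slt_trans hba (hstep hlt).1), mul_zero]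
    · rfl

/-- If the first letter already is `b`, only the empty subsequence contributes. -/
lemma chainSum_self {n : ℕ} {L : List (ℕ × ℤ)} (hL : ∀ t ∈ L, OkRefl n t)
    {a : ℤ} {u : List ℤ} (h : Good (a :: u)) (hn : u.length + 1 = n) :
    chainSum a L (a :: u) = 1 := by
  induction L with
  | nil => simp [chainSum_nil]
  | cons t L ih =>
    have hL' : ∀ t ∈ L, OkRefl n t := fun t ht => hL t (by simp [ht])
    obtain ⟨a', u', e, h', hn', hstep⟩ := refl_step (hL t (by simp)) h hn
    rw [chainSum, e, ih hL']
    split_ifs with hlt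
    · rw [chainSum_of_gt hL' h' hn' (hstep hlt).1, mul_zero, add_zero]
    · rw [add_zero]

/-! ### The suffixes of `Δ` -/

lemma deltaSuffixNeg_succ {p s : ℕ} (h : p ≤ s) :
    deltaSuffixNeg p (s + 1) = (1, -((s + 1 : ℕ) : ℤ)) :: deltaSuffixNeg p s := by
  unfold deltaSuffixNeg
  rw [show s + 1 - p = (s - p) + 1 by omega, List.range_succ_eq_map]
  simp

lemma deltaSuffixNeg_of_le {p s : ℕ} (h : s ≤ p) : deltaSuffixNeg p s = [] := by
  unfold deltaSuffixNeg
  rw [show s - p = 0 by omega]; rfl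

lemma deltaSuffixPos_cons {n p s : ℕ} (h : s ≤ n) :
    deltaSuffixPos n p s = (1, (s : ℤ)) :: deltaSuffixPos n p (s + 1) := by
  unfold deltaSuffixPos
  rw [show n + 1 - s = (n - s) + 1 by omega, List.range_succ_eq_map,
    show n + 1 - (s + 1) = n - s by omega]
  simp only [List.map_cons, List.map_map, Function.comp_def, List.cons_append, add_zero,
    Nat.succ_eq_add_one, add_assoc, add_comm 1]

lemma deltaSuffixPos_last (n p : ℕ) :
    deltaSuffixPos n p (n + 1) = (1, -1) :: deltaSuffixNeg p n := by
  simp [deltaSuffixPos, deltaSuffixNeg]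

lemma deltaSuffixNeg_ok {n p s : ℕ} (hp : 1 ≤ p) (hs : s ≤ n) :
    ∀ t ∈ deltaSuffixNeg p s, OkRefl n t := by
  intro t ht
  simp only [deltaSuffixNeg, List.mem_map, List.mem_range] at ht
  obtain ⟨r, hr, rfl⟩ := ht
  exact Or.inr ⟨s - r, by omega, by omega, Or.inr rfl⟩

lemma deltaSuffixPos_ok {n p s : ℕ} (hp : 1 ≤ p) (hs : 2 ≤ s) :
    ∀ t ∈ deltaSuffixPos n p s, OkRefl n t := by
  intro t ht
  simp only [deltaSuffixPos, List.mem_append, List.mem_map, List.mem_range,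
    List.mem_singleton] at ht
  rcases ht with (⟨r, hr, rfl⟩ | rfl) | ⟨r, hr, rfl⟩
  · exact Or.inr ⟨s + r, by omega, by omega, Or.inl rfl⟩
  · exact Or.inl rfl
  · exact Or.inr ⟨n - r, by omega, by omega, Or.inr rfl⟩

/-! ### Sums over the suffixes of `Δ` -/

lemma Nab_split {a d b : ℤ} (had : slt a d) (hdb : slt d b) {u : List ℤ}
    (hu : ∀ e ∈ u, e ≠ 0 ∧ e ≠ d) (hd : d ≠ 0) : Nab a d u + Nab d b u = Nab a b u := by
  induction u with
  | nil => rfl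
  | cons e u ih =>
    have ih' := ih (fun x hx => hu x (by simp [hx]))
    obtain ⟨e0, ed⟩ := hu e (by simp)
    simp only [Nab_cons]
    have q1 : slt e d ↔ ¬ slt d e := slt_iff_not e0 hd ed
    have q2 : slt d e → slt a e := slt_trans had
    have q3 : slt e d → slt e b := fun h => slt_trans h hdb
    by_cases hD : slt d e <;> simp_all <;> omega

/-- The reflections `(1,-s), …, (1,-(p+1))` do not move the letters beyond position `s`, so none
of these can become the first letter up to sign. -/
lemma neg_vanish_fixed {p : ℕ} (hp : 1 ≤ p) {b e : ℤ} (he : e = b ∨ e = -b) (s : ℕ) :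
    ∀ {a : ℤ} {u₁ u₂ : List ℤ}, Good (a :: (u₁ ++ e :: u₂)) → s ≤ u₁.length + 1 →
      chainSum b (deltaSuffixNeg p s) (a :: (u₁ ++ e :: u₂)) = 0 := by
  have base : ∀ {a : ℤ} {u₁ u₂ : List ℤ}, Good (a :: (u₁ ++ e :: u₂)) →
      chainSum b [] (a :: (u₁ ++ e :: u₂)) = 0 := by
    intro a u₁ u₂ h
    obtain ⟨-, -, h1, h2, -⟩ := h.letters
    rw [chainSum_nil, if_neg]
    omega
  induction s with
  | zero =>
    intro a u₁ u₂ h _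
    rw [deltaSuffixNeg_of_le (Nat.zero_le p)]
    exact base h
  | succ s ih =>
    intro a u₁ u₂ h hs
    rcases Nat.lt_or_ge s p with hsp | hsp
    · rw [deltaSuffixNeg_of_le hsp]
      exact base h
    · obtain ⟨x, d, y, rfl, hx⟩ := exists_split (u := u₁) (j := s + 1) (by omega) (by omega)
      have e1 : ∀ d, (x ++ d :: y) ++ e :: u₂ = x ++ d :: (y ++ e :: u₂) := fun d => by simp
      have h' := h
      rw [e1] at h'
      have h'' := h'.neg_swap
      rw [deltaSuffixNeg_succ hsp, e1, chainSum_neg _ _ h' hx]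
      rw [← e1] at h''
      rw [← e1, ← e1, ih h (by simp; omega), ih h'' (by simp; omega)]
      simp

/-- Once the first letter `a` has left position `1` through `(1,-s)`, it is not moved again by the
following reflections `(1,-r)`; hence `-a` is never reached. -/
lemma neg_vanish_self {p : ℕ} (hp : 1 ≤ p) {a : ℤ} {u : List ℤ} (h : Good (a :: u)) (s : ℕ)
    (hs : s ≤ u.length + 1) : chainSum (-a) (deltaSuffixNeg p s) (a :: u) = 0 := by
  have base : chainSum (-a) [] (a :: u) = 0 := by
    have := h.tail_ne.1
    rw [chainSum_nil, if_neg]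
    omega
  induction s with
  | zero => rw [deltaSuffixNeg_of_le (Nat.zero_le p)]; exact base
  | succ s ih =>
    rcases Nat.lt_or_ge s p with hsp | hsp
    · rw [deltaSuffixNeg_of_le hsp]; exact base
    · obtain ⟨x, d, y, rfl, hx⟩ := exists_split (u := u) (j := s + 1) (by omega) (by omega)
      rw [deltaSuffixNeg_succ hsp, chainSum_neg _ _ h hx, ih (by omega),
        neg_vanish_fixed hp (Or.inl rfl) s h.neg_swap (by omega)]
      simp

/-- Comparison of the contributions of the letters `±a, ±c, ±d` in the inductive step of
`neg_sum`. -/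
lemma sign_identity {a c d : ℤ} (ha : a ≠ 0) (hc : c ≠ 0) (hd : d ≠ 0) (hac : c ≠ a)
    (h1 : slt a (-d)) (h2 : slt (-d) (-c)) :
    (if 0 < a ∧ 0 < d then 1 else 0) + (if 0 < -d ∧ 0 < c then 1 else 0)
      + (if slt (-d) (-a) ∧ slt (-a) (-c) then 1 else 0)
      + (if slt (-d) a ∧ slt a (-c) then 1 else 0)
      + (if slt a c ∧ slt c (-d) then 1 else 0)
    = (if slt a d ∧ slt d (-c) then 1 else 0) + (if 0 < a ∧ 0 < c then 1 else 0) := by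
  have q1 : slt (-d) (-a) ↔ slt a d := slt_neg
  have q2 : slt (-a) (-c) ↔ slt c a := slt_neg
  have q3 : slt c a ↔ ¬ slt a c := slt_iff_not hc ha hac
  have q4 : ¬ slt (-d) a := slt_asymm h1
  have q5 : slt c (-d) ↔ slt d (-c) := slt_neg_right
  have q6 : slt c d := slt_neg.1 h2
  have q7 : slt a c → slt a d := fun h => slt_trans h q6
  have q8 : slt c a → slt d (-c) := fun h => slt_trans (slt_neg_right.1 h1) (slt_neg.2 h)
  have q9 : 0 < c ∨ (c < 0 ∧ d < 0 ∧ (0 < a → slt a c) ∧ ¬ slt d (-c)) := by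
    unfold slt at *; omega
  have q10 : a < 0 → 0 < d ∧ 0 < c ∧ ¬ slt a d := by
    unfold slt at *; omega
  simp only [q1, q2, q3, q5] at q8 ⊢
  simp only [q4, false_and, if_false]
  rcases lt_or_gt_of_ne ha with h | h
  · obtain ⟨r1, r2, r3⟩ := q10 h
    have r4 : ¬ slt a c := fun h => r3 (q7 h)
    simp [r3, r4, h.not_gt, r1.not_gt]
  · rcases q9 with r | ⟨r0, r1, r2, r3⟩
    · rcases lt_or_gt_of_ne hd with h' | h' <;> by_cases hA : slt a c <;>
        simp_all [h'.not_gt] <;> omega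
    · simp [r3, r0.not_gt, r2 h, r1.not_gt]

/-- The sum over the subsequences of `((1,-s), …, (1,-(p+1)))` with first letter `-c` at the end,
where `c` is at position `q = |u₁| + 2 ≤ s = |u₁| + |u₂| + 2`. -/
lemma neg_sum {n p : ℕ} (hp : 1 ≤ p) {c : ℤ} {u₁ : List ℤ} (hpu : p ≤ u₁.length + 1)
    (u₂ : List ℤ) : ∀ {a : ℤ} {u₃ : List ℤ}, Good (a :: (u₁ ++ c :: (u₂ ++ u₃))) →
      (u₁ ++ c :: (u₂ ++ u₃)).length + 1 = n → slt a (-c) →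
      chainSum (-c) (deltaSuffixNeg p (u₁.length + 2 + u₂.length))
          (a :: (u₁ ++ c :: (u₂ ++ u₃))) =
        (Polynomial.X : Polynomial ℤ) ^ (Nab a (-c) u₁ + Nab a (-c) u₂ + Nab a (-c) u₃
          + Nab a (-c) (u₃.map (fun x => -x)) + (if 0 < a ∧ 0 < c then 1 else 0)) *
          (1 - Polynomial.X) := by
  induction u₂ using List.reverseRecOn with
  | nil =>
    intro a u₃ h hn hac
    simp only [List.nil_append, List.length_nil, add_zero, Nab_nil] at *
    rw [deltaSuffixNeg_succ hpu, chainSum_neg _ _ h rfl, if_pos hac,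
      neg_vanish_fixed hp (Or.inr (neg_neg c).symm) _ h le_rfl,
      chainSum_self (n := n) (deltaSuffixNeg_ok hp (by simp at hn; omega)) h.neg_swap
        (by simpa using hn)]
    ring
  | append_singleton u₂ d ih =>
    intro a u₃ h hn hac
    have e1 : ∀ d, u₁ ++ c :: (u₂ ++ [d] ++ u₃) = u₁ ++ c :: (u₂ ++ d :: u₃) :=
      fun d => by simp
    have e2 : ∀ d, u₁ ++ c :: (u₂ ++ d :: u₃) = (u₁ ++ c :: u₂) ++ d :: u₃ := fun d => by simp
    rw [e1] at h hn ⊢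
    have hB := ih h hn hac
    have hg := h
    rw [e2] at hg
    have hg' := hg.neg_swap
    rw [← e2] at hg'
    obtain ⟨a0, d0, da, dna, hu1, hu3⟩ := hg.letters
    obtain ⟨-, c0, ca, cna, -⟩ := h.letters
    have hcd := hu1 c (by simp)
    rw [show u₁.length + 2 + (u₂ ++ [d]).length = (u₁.length + 2 + u₂.length) + 1 by simp; omega,
      deltaSuffixNeg_succ (by omega), e2, chainSum_neg _ _ hg (by simp; omega), ← e2, ← e2, hB]
    simp only [Nab_append, Nab_cons, Nab_nil, List.map_cons]
    by_cases h1 : slt a (-d)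
    · rw [if_pos h1]
      by_cases h2 : slt (-d) (-c)
      · have hI := ih hg' (by simpa using hn) h2
        rw [hI]
        simp only [Nab_cons, List.map_cons, neg_neg]
        have n1 := Nab_split h1 h2 (u := u₁)
          (fun e he => ⟨(hu1 e (by simp [he])).1, by have := hu1 e (by simp [he]); tauto⟩)
          (by omega)
        have n2 := Nab_split h1 h2 (u := u₂)
          (fun e he => ⟨(hu1 e (by simp [he])).1, by have := hu1 e (by simp [he]); tauto⟩)
          (by omega)
        have n3 := Nab_split h1 h2 (u := u₃)
          (fun e he => ⟨(hu3 e he).1, by have := hu3 e he; tauto⟩) (by omega)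
        have n4 := Nab_split h1 h2 (u := u₃.map (fun x => -x))
          (fun e he => by
            obtain ⟨x, hx, rfl⟩ := List.mem_map.1 he
            have := hu3 x hx
            omega) (by omega)
        have key := sign_identity a0 c0 d0 ca h1 h2
        rw [if_pos (⟨h1, h2⟩ : slt a (-d) ∧ slt (-d) (-c))]
        generalize hE : Nab a (-c) u₁ + (Nab a (-c) u₂ + ((if slt a d ∧ slt d (-c) then 1 else 0)
          + 0)) + Nab a (-c) u₃ + Nab a (-c) (u₃.map (fun x => -x))
          + (if 0 < a ∧ 0 < c then 1 else 0) = E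
        rw [show ∀ A B : ℕ, ∀ P Q : Polynomial ℤ, (Polynomial.X : Polynomial ℤ) ^ A * P *
          (Polynomial.X ^ B * Q) = Polynomial.X ^ (A + B) * (P * Q) by intros; ring]
        rw [show ∀ A B : ℕ, A = E + 1 → B = E → ∀ P : Polynomial ℤ,
          (Polynomial.X : Polynomial ℤ) ^ A * P + Polynomial.X ^ B * (P * P) =
            Polynomial.X ^ E * (P * (P + Polynomial.X)) by
              rintro A B rfl rfl P; ring]
        · ring
        · omega
        · omega
      · have hlt : slt (-c) (-d) := slt_trichotomy (by omega) (by omega) (by omega) h2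
        rw [chainSum_of_gt (n := n) (deltaSuffixNeg_ok hp (by simp at hn; omega)) hg'
          (by simpa using hn) hlt]
        simp only [h2, and_false, if_false]
        ring
    · simp only [h1, false_and, if_false]
      ring

/-- The sum over the subsequences of `Δ_r`, `r = |v| + 2`, with first letter `-c` at the end,
when `c` is at position `1` or at a position `q` with `p < q < r`. -/
lemma pos_sum {n p : ℕ} (hp : 1 ≤ p) {c : ℤ} (x : List ℤ) : ∀ {a : ℤ} {v : List ℤ},
    Good (a :: (v ++ x)) → (v ++ x).length + 1 = n → slt a (-c) →
    ((c = a ∧ p ≤ v.length + 1) ∨ ∃ v₁ v₂, v = v₁ ++ c :: v₂ ∧ p ≤ v₁.length + 1) →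
    chainSum (-c) (deltaSuffixPos n p (v.length + 2)) (a :: (v ++ x)) =
      (Polynomial.X : Polynomial ℤ) ^ (Nab a (-c) v) * (1 - Polynomial.X) := by
  induction x with
  | nil =>
    intro a v h hn hac hc
    rw [List.append_nil] at *
    rw [show v.length + 2 = n + 1 by omega, deltaSuffixPos_last, chainSum_bar _ _ h]
    rcases hc with ⟨rfl, hpv⟩ | ⟨v₁, v₂, rfl, hpv⟩
    · rw [if_pos hac, neg_vanish_self hp h n (by omega),
        chainSum_self (n := n) (deltaSuffixNeg_ok hp le_rfl) h.neg_head hn]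
      ring
    · have hns : n = v₁.length + 2 + v₂.length := by simp at hn; omega
      have hB := neg_sum (n := n) hp hpv v₂ (a := a) (c := c) (u₃ := [])
      have hB' := neg_sum (n := n) hp hpv v₂ (a := -a) (c := c) (u₃ := [])
      simp only [List.append_nil, List.map_nil, Nab_nil, add_zero, ← hns] at hB hB'
      obtain ⟨a0, c0, ca, cna, h1, h2⟩ := h.letters
      rw [hB h hn hac]
      simp only [Nab_append, Nab_cons]
      by_cases ha : slt a (-a)
      · rw [if_pos ha]
        have ha' : 0 < a := by unfold slt at ha; omega
        by_cases hlt : slt (-a) (-c)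
        · have hca := slt_neg.1 hlt
          have hc' : 0 < c := by unfold slt at hca; omega
          have hnac : ¬ slt a c := slt_asymm hca
          have n1 := Nab_split ha hlt (u := v₁)
            (fun e he => ⟨(h1 e he).1, by have := h1 e he; tauto⟩) (by omega)
          have n2 := Nab_split ha hlt (u := v₂)
            (fun e he => ⟨(h2 e he).1, by have := h2 e he; tauto⟩) (by omega)
          rw [hB' h.neg_head hn hlt, ← n1, ← n2]
          simp only [ha', hc', hnac, and_self, if_true, false_and, if_false, not_lt.2 ha'.le,
            Left.neg_pos_iff]
          ring
        · rw [chainSum_of_gt (n := n) (deltaSuffixNeg_ok hp le_rfl) h.neg_head hn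
            (slt_trichotomy (by omega) (by omega) (by omega) hlt)]
          have q1 : (slt a c ∧ slt c (-c)) ↔ (0 < a ∧ 0 < c) := by
            unfold slt at *; omega
          simp only [q1]
          ring
      · rw [if_neg ha]
        have q1 : (slt a c ∧ slt c (-c)) ↔ (0 < a ∧ 0 < c) := by
          unfold slt at *; omega
        simp only [q1]
        ring
  | cons d x ih =>
    intro a v h hn hac hc
    have e1 : ∀ d, v ++ d :: x = (v ++ [d]) ++ x := fun d => by simp
    have hpv : p ≤ v.length + 1 := by
      rcases hc with ⟨-, hpv⟩ | ⟨v₁, v₂, rfl, hpv⟩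
      · exact hpv
      · simp; omega
    have h' := h.swap
    obtain ⟨a0, d0, da, dna, h1, h2⟩ := h.letters
    -- `c` is itself a letter to the left of `d`
    have hcd : c ≠ 0 ∧ d ≠ -c := by
      rcases hc with ⟨rfl, -⟩ | ⟨v₁, v₂, rfl, -⟩
      · exact ⟨a0, dna⟩
      · have := h1 c (by simp)
        exact ⟨this.1, by omega⟩
    have hB : chainSum (-c) (deltaSuffixPos n p (v.length + 2 + 1)) (a :: (v ++ d :: x)) =
        (Polynomial.X : Polynomial ℤ) ^ (Nab a (-c) (v ++ [d])) * (1 - Polynomial.X) := by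
      rw [e1] at h hn ⊢
      have := ih h hn hac (by
        rcases hc with ⟨rfl, -⟩ | ⟨v₁, v₂, rfl, hp1⟩
        · exact Or.inl ⟨rfl, by simp; omega⟩
        · exact Or.inr ⟨v₁, v₂ ++ [d], by simp, hp1⟩)
      rw [← this]
      congr 2
      simp
    rw [deltaSuffixPos_cons (by simp at hn; omega), chainSum_pos _ _ h rfl, hB, Nab_append,
      Nab_cons, Nab_nil, add_zero]
    by_cases had : slt a d
    · rw [if_pos had]
      by_cases hdb : slt d (-c)
      · have hI : chainSum (-c) (deltaSuffixPos n p (v.length + 2 + 1)) (d :: (v ++ a :: x)) =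
            (Polynomial.X : Polynomial ℤ) ^ (Nab d (-c) (v ++ [a])) * (1 - Polynomial.X) := by
          rw [e1] at h' ⊢
          have := ih h' (by simpa using hn) hdb (by
            rcases hc with ⟨rfl, -⟩ | ⟨v₁, v₂, rfl, hp1⟩
            · exact Or.inr ⟨v, [], rfl, hpv⟩
            · exact Or.inr ⟨v₁, v₂ ++ [a], by simp, hp1⟩)
          rw [← this]
          congr 2
          simp
        have hda : ¬ slt d a := slt_asymm had
        have n1 := Nab_split had hdb (u := v)
          (fun e he => ⟨(h1 e he).1, by have := h1 e he; tauto⟩) d0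
        rw [hI, Nab_append, Nab_cons, Nab_nil, ← n1]
        simp only [had, hdb, hda, and_self, if_true, false_and, if_false]
        ring
      · rw [chainSum_of_gt (n := n) (deltaSuffixPos_ok hp (by omega)) h' (by simpa using hn)
          (slt_trichotomy d0 (by omega) hcd.2 hdb)]
        simp only [hdb, and_false, if_false]
        ring
    · simp only [had, false_and, if_false]
      ring

/-- The evaluation of the sum over `Δ_q`. -/
lemma chainSum_deltaSuffixPos {n p : ℕ} (hp : 1 ≤ p) {a c : ℤ} {v x : List ℤ}
    (h : Good (a :: (v ++ c :: x))) (hn : (v ++ c :: x).length + 1 = n) (hac : slt a (-c))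
    (hpv : p ≤ v.length + 1) :
    chainSum (-c) (deltaSuffixPos n p (v.length + 2)) (a :: (v ++ c :: x)) =
      (Polynomial.X : Polynomial ℤ) ^ (Nab a (-c) v) * (1 - Polynomial.X) := by
  have e1 : ∀ d, v ++ d :: x = (v ++ [d]) ++ x := fun d => by simp
  have h' := h.swap
  obtain ⟨a0, c0, ca, cna, h1, h2⟩ := h.letters
  have hB : chainSum (-c) (deltaSuffixPos n p (v.length + 2 + 1)) (a :: (v ++ c :: x)) =
      (Polynomial.X : Polynomial ℤ) ^ (Nab a (-c) (v ++ [c])) * (1 - Polynomial.X) := by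
    rw [e1] at h hn ⊢
    rw [← pos_sum hp x h hn hac (Or.inr ⟨v, [], rfl, hpv⟩)]
    congr 2
    simp
  rw [deltaSuffixPos_cons (by simp at hn; omega), chainSum_pos _ _ h rfl, hB, Nab_append,
    Nab_cons, Nab_nil, add_zero]
  by_cases had : slt a c
  · rw [if_pos had]
    by_cases hdb : slt c (-c)
    · have hI : chainSum (-c) (deltaSuffixPos n p (v.length + 2 + 1)) (c :: (v ++ a :: x)) =
          (Polynomial.X : Polynomial ℤ) ^ (Nab c (-c) (v ++ [a])) * (1 - Polynomial.X) := by
        rw [e1] at h' ⊢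
        rw [← pos_sum hp x h' (by simpa using hn) hdb (Or.inl ⟨rfl, by simp; omega⟩)]
        congr 2
        simp
      have hda : ¬ slt c a := slt_asymm had
      have n1 := Nab_split had hdb (u := v)
        (fun e he => ⟨(h1 e he).1, by have := h1 e he; tauto⟩) c0
      rw [hI, Nab_append, Nab_cons, Nab_nil, ← n1]
      simp only [had, hdb, hda, and_self, if_true, false_and, if_false]
      ring
    · rw [chainSum_of_gt (n := n) (deltaSuffixPos_ok hp (by omega)) h' (by simpa using hn)
        (slt_trichotomy c0 (by omega) (by omega) hdb)]
      simp only [hdb, and_false, if_false]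
      ring
  · simp only [had, false_and, if_false]
    ring

/-! ### Subsequences selected by sets of positions -/

lemma selChain_image_succ (t : ℕ × ℤ) (L : List (ℕ × ℤ)) (J : Finset ℕ) :
    selChain (t :: L) (J.image Nat.succ) = selChain L J := by
  have h : (J.image Nat.succ).sort (· ≤ ·) = (J.sort (· ≤ ·)).map Nat.succ := by
    have := Finset.map_sort (r := (· ≤ ·)) (r' := (· ≤ ·))
      (f := ⟨Nat.succ, Nat.succ_injective⟩) (s := J) (by simp)
    rw [Finset.map_eq_image] at this
    exact this.symm
  simp [selChain, h, Function.comp_def]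

lemma selChain_insert_zero (t : ℕ × ℤ) (L : List (ℕ × ℤ)) (J : Finset ℕ) :
    selChain (t :: L) (insert 0 (J.image Nat.succ)) = t :: selChain L J := by
  have h : (insert 0 (J.image Nat.succ)).sort (· ≤ ·) =
      0 :: (J.image Nat.succ).sort (· ≤ ·) :=
    Finset.sort_insert (r := (· ≤ ·)) (by simp) (by simp)
  rw [← selChain_image_succ t L J]
  simp [selChain, h]

/-- Subsequences of `t :: L` are those of `L`, without or with `t` in front. -/
lemma sum_selChain_cons (f : List (ℕ × ℤ) → Polynomial ℤ) (t : ℕ × ℤ) (L : List (ℕ × ℤ)) :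
    ∑ J ∈ (Finset.range (t :: L).length).powerset, f (selChain (t :: L) J) =
      ∑ J ∈ (Finset.range L.length).powerset, f (selChain L J) +
      ∑ J ∈ (Finset.range L.length).powerset, f (t :: selChain L J) := by
  have hr : Finset.range (t :: L).length =
      insert 0 ((Finset.range L.length).image Nat.succ) := by
    ext i
    cases i <;> simp
  have hinj : Set.InjOn (fun J : Finset ℕ => J.image Nat.succ)
      ((Finset.range L.length).powerset : Set (Finset ℕ)) :=
    (Finset.image_injective Nat.succ_injective).injOn
  rw [hr, Finset.sum_powerset_insert (by simp), Finset.powerset_image, Finset.sum_image hinj,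
    Finset.sum_image hinj]
  simp only [selChain_image_succ, selChain_insert_zero]

/-- The contribution of a single sequence `T` of reflections to the sum. -/
noncomputable def chainWeight (b : ℤ) (w : List ℤ) (T : List (ℕ × ℤ)) : Polynomial ℤ :=
  if incChain w T = true ∧ (applyAll w T).getD 0 0 = b then
    (Polynomial.X : Polynomial ℤ) ^ ((len (applyAll w T) - len w - T.length) / 2) *
      (1 - Polynomial.X) ^ T.length
  else 0

/-- Along an increasing chain each step adds an odd number to the length, so the exponent
`(ℓ(wT) - ℓ(w) - |T|) / 2` is an exact, non-truncated natural number. -/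
lemma incChain_parity {n : ℕ} {T : List (ℕ × ℤ)} (hT : ∀ t ∈ T, OkRefl n t) :
    ∀ {a : ℤ} {u : List ℤ}, Good (a :: u) → u.length + 1 = n → incChain (a :: u) T = true →
      ∃ k, len (applyAll (a :: u) T) = len (a :: u) + T.length + 2 * k := by
  induction T with
  | nil => intro a u _ _ _; exact ⟨0, rfl⟩
  | cons t T ih =>
    intro a u h hn hi
    obtain ⟨a', u', e, h', hn', hstep⟩ := refl_step (hT t (by simp)) h hn
    simp only [incChain, e, Bool.and_eq_true, decide_eq_true_eq] at hi
    obtain ⟨k, hk⟩ := ih (fun t ht => hT t (by simp [ht])) h' hn' hi.2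
    obtain ⟨-, m, hm⟩ := hstep hi.1
    refine ⟨k + m, ?_⟩
    have e2 : applyAll (a :: u) (t :: T) = applyAll (a' :: u') T := by
      simp [applyAll, e]
    rw [e2, hk, hm, List.length_cons]
    ring

lemma chainWeight_cons {n : ℕ} (b : ℤ) {t : ℕ × ℤ} {T : List (ℕ × ℤ)}
    (hT : ∀ s ∈ t :: T, OkRefl n s) {a : ℤ} {u : List ℤ} (h : Good (a :: u))
    (hn : u.length + 1 = n) :
    chainWeight b (a :: u) (t :: T) =
      if len (a :: u) < len (applyRefl (a :: u) t) then
        (Polynomial.X : Polynomial ℤ) ^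
            ((len (applyRefl (a :: u) t) - len (a :: u) - 1) / 2) *
          (1 - Polynomial.X) * chainWeight b (applyRefl (a :: u) t) T
      else 0 := by
  obtain ⟨a', u', e, h', hn', hstep⟩ := refl_step (hT t (by simp)) h hn
  have e2 : applyAll (a :: u) (t :: T) = applyAll (a' :: u') T := by
    simp [applyAll, e]
  unfold chainWeight
  rw [e2, e]
  simp only [incChain, e, Bool.and_eq_true, decide_eq_true_eq]
  by_cases hlt : len (a :: u) < len (a' :: u')
  · by_cases hr : incChain (a' :: u') T = true ∧ (applyAll (a' :: u') T).getD 0 0 = b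
    · obtain ⟨k, hk⟩ := incChain_parity (fun t ht => hT t (by simp [ht])) h' hn' hr.1
      obtain ⟨-, m, hm⟩ := hstep hlt
      rw [if_pos ⟨⟨hlt, hr.1⟩, hr.2⟩, if_pos hlt, if_pos hr, List.length_cons,
        show (len (applyAll (a' :: u') T) - len (a :: u) - (T.length + 1)) / 2 = m + k by omega,
        show (len (a' :: u') - len (a :: u) - 1) / 2 = m by omega,
        show (len (applyAll (a' :: u') T) - len (a' :: u') - T.length) / 2 = k by omega]
      ring
    · rw [if_neg (fun hc => hr ⟨hc.1.2, hc.2⟩), if_pos hlt, if_neg hr, mul_zero]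
  · rw [if_neg (fun hc => hlt hc.1.1), if_neg hlt]

lemma mem_of_mem_selChain {L : List (ℕ × ℤ)} {J : Finset ℕ} (hJ : J ⊆ Finset.range L.length)
    {t : ℕ × ℤ} (ht : t ∈ selChain L J) : t ∈ L := by
  simp only [selChain, List.mem_map, Finset.mem_sort] at ht
  obtain ⟨j, hj, rfl⟩ := ht
  have := Finset.mem_range.1 (hJ hj)
  rw [List.getD_eq_getElem _ _ this]
  exact List.getElem_mem this

/-- `chainSum` is the sum over all subsequences. -/
lemma sum_chainWeight {n : ℕ} (b : ℤ) {L : List (ℕ × ℤ)} (hL : ∀ t ∈ L, OkRefl n t) :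
    ∀ {a : ℤ} {u : List ℤ}, Good (a :: u) → u.length + 1 = n →
      ∑ J ∈ (Finset.range L.length).powerset, chainWeight b (a :: u) (selChain L J) =
        chainSum b L (a :: u) := by
  induction L with
  | nil =>
    intro a u _ _
    simp [chainWeight, chainSum, selChain, incChain, applyAll]
  | cons t L ih =>
    intro a u h hn
    have hL' : ∀ t ∈ L, OkRefl n t := fun t ht => hL t (by simp [ht])
    obtain ⟨a', u', e, h', hn', -⟩ := refl_step (hL t (by simp)) h hn
    rw [sum_selChain_cons, ih hL' h hn, chainSum]
    congr 1
    rw [Finset.sum_congr rfl (fun J hJ => chainWeight_cons b (T := selChain L J) (fun s hs => by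
      rcases List.mem_cons.1 hs with rfl | hs
      · exact hL _ (by simp)
      · exact hL' s (mem_of_mem_selChain (Finset.mem_powerset.1 hJ) hs)) h hn)]
    split_ifs with hlt
    · rw [← Finset.mul_sum, e, ih hL' h' hn']
    · simp

/-- The sum over sets `J` of positions in the chain is `chainSum`. -/
lemma finsum_eq_chainSum {n : ℕ} (b : ℤ) {L : List (ℕ × ℤ)} (hL : ∀ t ∈ L, OkRefl n t)
    {a : ℤ} {u : List ℤ} (h : Good (a :: u)) (hn : u.length + 1 = n) :
    (∑ᶠ (J : Finset ℕ) (_ : J ⊆ Finset.range L.length ∧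
        incChain (a :: u) (selChain L J) = true ∧
        (applyAll (a :: u) (selChain L J)).getD 0 0 = b),
      (Polynomial.X : Polynomial ℤ) ^
          ((len (applyAll (a :: u) (selChain L J)) - len (a :: u) - J.card) / 2) *
        (1 - Polynomial.X) ^ J.card) = chainSum b L (a :: u) := by
  have hcard : ∀ J : Finset ℕ, (selChain L J).length = J.card := fun J => by simp [selChain]
  rw [← sum_chainWeight b hL h hn, finsum_cond_eq_sum_of_cond_iff
    (t := (Finset.range L.length).powerset.filter (fun J =>
      incChain (a :: u) (selChain L J) = true ∧
        (applyAll (a :: u) (selChain L J)).getD 0 0 = b)) _ (by simp), Finset.sum_filter]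
  refine Finset.sum_congr rfl fun J _ => ?_
  rw [chainWeight, hcard]

lemma good_of_mem_allWindows {n : ℕ} {w : List ℤ} (hw : w ∈ allWindows n) :
    Good w ∧ w.length = n := by
  simp only [allWindows, Finset.mem_image, Finset.mem_univ, true_and] at hw
  obtain ⟨⟨σ, s⟩, rfl⟩ := hw
  refine ⟨⟨?_, ?_⟩, by simp⟩
  · intro x hx
    obtain ⟨i, -, rfl⟩ := List.mem_map.1 hx
    dsimp only
    split_ifs <;> omega
  · rw [List.map_map]
    refine List.Nodup.map (fun i j hij => ?_) (List.nodup_finRange n)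
    apply σ.injective
    apply Fin.ext
    simp only [Function.comp_apply] at hij
    split_ifs at hij <;> omega

/-- formula (6.9): the sum over increasing-admissible
subsequences of the suffix `Δ_q`, with `c = w(q)`, `b = -c`, `a = w(1) ≺ b`. -/
theorem delta_sum_pos_suffix_q (n : ℕ) (w : List ℤ) (hw : w ∈ allWindows n)
    (p q : ℕ) (hp1 : 1 ≤ p) (hp2 : p ≤ n) (hpq : p < q) (hqn : q ≤ n)
    (hab : slt (w.getD 0 0) (-(w.getD (q - 1) 0))) :
    (∑ᶠ (J : Finset ℕ) (_ : J ⊆ Finset.range (deltaSuffixPos n p q).length ∧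
        incChain w (selChain (deltaSuffixPos n p q) J) = true ∧
        (applyAll w (selChain (deltaSuffixPos n p q) J)).getD 0 0 = -(w.getD (q - 1) 0)),
      (Polynomial.X : Polynomial ℤ) ^
          ((len (applyAll w (selChain (deltaSuffixPos n p q) J)) - len w - J.card) / 2) *
        (1 - Polynomial.X) ^ J.card)
      = (Polynomial.X : Polynomial ℤ) ^
          (Nab (w.getD 0 0) (-(w.getD (q - 1) 0)) (word w 2 (q - 1))) *
          (1 - Polynomial.X) := by
  obtain ⟨hg, hlen⟩ := good_of_mem_allWindows hw
  obtain ⟨a, u, rfl⟩ : ∃ a u, w = a :: u := List.exists_cons_of_ne_nil (by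
    rintro rfl
    simp at hlen
    omega)
  rw [List.length_cons] at hlen
  obtain ⟨v, c, x, rfl, hq⟩ := exists_split (u := u) (j := q) (by omega) (by omega)
  have h0 : (a :: (v ++ c :: x)).getD 0 0 = a := rfl
  have h1 : (a :: (v ++ c :: x)).getD (q - 1) 0 = c := by
    rw [hq, show v.length + 2 - 1 = v.length + 1 by omega]
    simp
  have h2 : word (a :: (v ++ c :: x)) 2 (q - 1) = v := by
    rw [word, show q - 1 + 1 - 2 = v.length by omega]
    simp
  rw [h0, h1] at hab
  rw [finsum_eq_chainSum _ (deltaSuffixPos_ok hp1 (by omega)) hg hlen, h0, h1, h2, hq]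
  exact chainSum_deltaSuffixPos hp1 hg hlen hab (by omega)
end HL
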